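/- Suppose Φ is infinite and B is positive semidefinite (but not positive definite), i.e., (Φ,Δ) is an affine based root system. Then E(Φ) is finite. If moreover (Φ,Δ) is irreducible, then E(Φ) is a singleton and E(Φ) = Q̂ = Q ∩ V₁. -/

import Mathlib

open Filter Topology

noncomputable section

variable {ι V : Type*} [Fintype ι] [NormedAddCommGroup V] [NormedSpace ℝ V]

/-- The set of simple `B`-reflections: the linear automorphisms of `V` given by the
`B`-reflection formula `u ↦ u - 2 (B α u / B α α) • α` associated to a simple root `α ∈ Δ`. -/
def simpleReflections (B : LinearMap.BilinForm ℝ V) (Δ : Module.Basis ι ℝ V) :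
    Set (V ≃ₗ[ℝ] V) :=
  { e | ∃ i : ι, ∀ u : V, e u = u - (2 * B (Δ i) u / B (Δ i) (Δ i)) • Δ i }

/-- The geometric Coxeter group `W`: the subgroup of linear automorphisms of `V`
generated by the simple `B`-reflections. -/
def cox (B : LinearMap.BilinForm ℝ V) (Δ : Module.Basis ι ℝ V) : Subgroup (V ≃ₗ[ℝ] V) :=
  Subgroup.closure (simpleReflections B Δ)

/-- The root system `Φ = W ⬝ Δ`. -/
def Phi (B : LinearMap.BilinForm ℝ V) (Δ : Module.Basis ι ℝ V) : Set V :=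
  { ρ | ∃ w ∈ cox B Δ, ∃ i : ι, w (Δ i) = ρ }

/-- The positive roots `Φ⁺ = Φ ∩ cone(Δ)`. -/
def posPhi (B : LinearMap.BilinForm ℝ V) (Δ : Module.Basis ι ℝ V) : Set V :=
  { ρ ∈ Phi B Δ | ∀ i : ι, 0 ≤ Δ.repr ρ i }

/-- `|v|₁`: the sum of the coordinates of `v` in the basis `Δ`. -/
def l1 (Δ : Module.Basis ι ℝ V) (v : V) : ℝ := ∑ i : ι, Δ.repr v i

/-- The normalization map `v ↦ v̂ = v / |v|₁`. -/
def nrm (Δ : Module.Basis ι ℝ V) (v : V) : V := (l1 Δ v)⁻¹ • v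

/-- The set `Φ̂` of normalized roots. -/
def nPhi (B : LinearMap.BilinForm ℝ V) (Δ : Module.Basis ι ℝ V) : Set V :=
  nrm Δ '' posPhi B Δ

/-- `E(Φ)`: the set of accumulation points of the set of normalized roots. -/
def Eset (B : LinearMap.BilinForm ℝ V) (Δ : Module.Basis ι ℝ V) : Set V :=
  { x | AccPt x (𝓟 (nPhi B Δ)) }

/-- The isotropic cone `Q` of `B`. -/
def isoQ (B : LinearMap.BilinForm ℝ V) : Set V := { v | B v v = 0 }


/-- Chebyshev-like coefficients. -/
def pc (c : ℝ) : ℕ → ℝ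
  | 0 => 0
  | 1 => 1
  | (n+2) => 2 * c * pc c (n+1) - pc c n

lemma pc_nonneg_of_one_le {c : ℝ} (hc : 1 ≤ c) (n : ℕ) : 0 ≤ pc c n ∧ pc c n ≤ pc c (n+1) := by
  induction n with
  | zero => simp [pc]
  | succ n ih =>
    obtain ⟨h1, h2⟩ := ih
    refine ⟨h1.trans h2, ?_⟩
    simp only [pc]
    nlinarith

lemma pc_sin (t : ℝ) (n : ℕ) : pc (Real.cos t) n * Real.sin t = Real.sin (n * t) := by
  induction n using Nat.strong_induction_on with
  | _ n ih =>
    match n with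
    | 0 => simp [pc]
    | 1 => simp [pc]
    | (n+2) =>
      have h1 := ih (n+1) (by omega)
      have h0 := ih n (by omega)
      simp only [pc]
      have e1 : ((n + 2 : ℕ) : ℝ) * t = ((n + 1 : ℕ) : ℝ) * t + t := by push_cast; ring
      have e0 : ((n : ℕ) : ℝ) * t = ((n + 1 : ℕ) : ℝ) * t - t := by push_cast; ring
      rw [e0, Real.sin_sub] at h0
      rw [e1, Real.sin_add]
      linear_combination 2 * Real.cos t * h1 - h0

lemma sin_pi_div_pos {k : ℕ} (hk : 2 ≤ k) : 0 < Real.sin (Real.pi / k) := by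
  have hk' : (2:ℝ) ≤ k := by exact_mod_cast hk
  apply Real.sin_pos_of_pos_of_lt_pi
  · have := Real.pi_pos; positivity
  · rw [div_lt_iff₀ (by linarith)]; nlinarith [Real.pi_pos]

lemma pc_nonneg_of_le {k : ℕ} (hk : 2 ≤ k) {n : ℕ} (hn : n ≤ k) :
    0 ≤ pc (Real.cos (Real.pi / k)) n := by
  have hs := sin_pi_div_pos hk
  have h := pc_sin (Real.pi / k) n
  have hk' : (2:ℝ) ≤ k := by exact_mod_cast hk
  have hn' : (n:ℝ) ≤ k := by exact_mod_cast hn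
  have : 0 ≤ Real.sin (n * (Real.pi / k)) := by
    apply Real.sin_nonneg_of_nonneg_of_le_pi
    · have := Real.pi_pos; positivity
    · rw [← mul_div_assoc, div_le_iff₀ (by linarith)]; nlinarith [Real.pi_pos]
  rw [← h] at this
  exact nonneg_of_mul_nonneg_left this hs

lemma pc_k {k : ℕ} (hk : 2 ≤ k) : pc (Real.cos (Real.pi / k)) k = 0 := by
  have hs := sin_pi_div_pos hk
  have h := pc_sin (Real.pi / k) k
  have hk' : (2:ℝ) ≤ k := by exact_mod_cast hk
  rw [mul_div_cancel₀ _ (by linarith), Real.sin_pi] at h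
  simpa [hs.ne'] using h

lemma pc_k_pred {k : ℕ} (hk : 2 ≤ k) : pc (Real.cos (Real.pi / k)) (k-1) = 1 := by
  have hs := sin_pi_div_pos hk
  have h := pc_sin (Real.pi / k) (k-1)
  have hk' : (2:ℝ) ≤ k := by exact_mod_cast hk
  have e : ((k - 1 : ℕ) : ℝ) * (Real.pi / k) = Real.pi - Real.pi / k := by
    rw [Nat.cast_sub (by omega)]; field_simp; simp
  rw [e, Real.sin_pi_sub] at h
  exact mul_right_cancel₀ hs.ne' (by rw [h, one_mul])

lemma pc_k_succ {k : ℕ} (hk : 2 ≤ k) : pc (Real.cos (Real.pi / k)) (k+1) = -1 := by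
  obtain ⟨m, rfl⟩ : ∃ m, k = m + 1 := ⟨k-1, by omega⟩
  have h1 := pc_k hk
  have h2 := pc_k_pred hk
  simp only [Nat.add_sub_cancel] at h2
  simp only [pc]
  rw [h1, h2]; ring

section alt
variable {G : Type*} [Group G] (σ : ι → G)

/-- word product -/
def wp (l : List ι) : G := (l.map σ).prod

/-- alternating product with `n` letters ending in `t` -/
def altp : ι → ι → ℕ → G
  | _, _, 0 => 1
  | s, t, (n+1) => altp t s n * σ t

lemma wp_append (l l' : List ι) : wp σ (l ++ l') = wp σ l * wp σ l' := by simp [wp]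

lemma altp_list (s t : ι) (n : ℕ) :
    ∃ l : List ι, l.length = n ∧ (∀ x ∈ l, x = s ∨ x = t) ∧ wp σ l = altp σ s t n := by
  induction n generalizing s t with
  | zero => exact ⟨[], by simp [wp, altp]⟩
  | succ n ih =>
    obtain ⟨l, h1, h2, h3⟩ := ih t s
    refine ⟨l ++ [t], by simp [h1], ?_, ?_⟩
    · intro x hx
      simp only [List.mem_append, List.mem_singleton] at hx
      rcases hx with hx | hx
      · exact (h2 x hx).symm
      · exact Or.inr hx
    · rw [wp_append, h3]; simp [wp, altp]

lemma altp_split (s t : ι) (a k : ℕ) : ∃ l : List ι, l.length = a ∧ (∀ x ∈ l, x = s ∨ x = t) ∧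
    altp σ s t (a + k) = wp σ l * altp σ s t k := by
  induction k generalizing s t with
  | zero =>
    obtain ⟨l, h1, h2, h3⟩ := altp_list σ s t a
    exact ⟨l, h1, h2, by simp [altp, h3]⟩
  | succ k ih =>
    obtain ⟨l, h1, h2, h3⟩ := ih t s
    refine ⟨l, h1, fun x hx => (h2 x hx).symm, ?_⟩
    rw [← add_assoc, altp, h3, altp, mul_assoc]

lemma wp_alt (hsq : ∀ i, σ i * σ i = 1) (s t : ι) (l : List ι) (hl : ∀ x ∈ l, x = s ∨ x = t) :
    ∃ n ≤ l.length, wp σ l = altp σ s t n ∨ wp σ l = altp σ t s n := by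
  induction l using List.reverseRecOn with
  | nil => exact ⟨0, by simp [wp, altp]⟩
  | append_singleton l x ih =>
    obtain ⟨n, hn, h⟩ := ih (fun y hy => hl y (by simp [hy]))
    have key : ∀ s t, wp σ l = altp σ s t n → ∀ y, (y = s ∨ y = t) →
        ∃ m ≤ l.length + 1, wp σ l * σ y = altp σ s t m ∨ wp σ l * σ y = altp σ t s m := by
      intro s t h y hy
      rcases hy with rfl | rfl
      · exact ⟨n+1, by omega, Or.inr (by rw [h, altp])⟩
      · cases n with
        | zero => exact ⟨1, by omega, Or.inl (by simp [h, altp])⟩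
        | succ m => exact ⟨m, by omega, Or.inr (by rw [h, altp, mul_assoc, hsq, mul_one])⟩
    rw [wp_append, List.length_append]
    have e : wp σ [x] = σ x := by simp [wp]
    rw [e]
    have hx := hl x (by simp)
    rcases h with h | h
    · exact key s t h x hx
    · obtain ⟨m, hm, h'⟩ := key t s h x hx.symm
      exact ⟨m, hm, h'.symm⟩

/-- length -/
def wl (w : G) : ℕ := sInf {n | ∃ l : List ι, l.length = n ∧ wp σ l = w}

lemma wl_le (l : List ι) : wl σ (wp σ l) ≤ l.length := Nat.sInf_le ⟨l, rfl, rfl⟩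

lemma wl_spec (l : List ι) : ∃ l', l'.length = wl σ (wp σ l) ∧ wp σ l' = wp σ l :=
  Nat.sInf_mem (s := {n | ∃ l' : List ι, l'.length = n ∧ wp σ l' = wp σ l}) ⟨_, l, rfl, rfl⟩

lemma wl_mul (l l' : List ι) : wl σ (wp σ l * wp σ l') ≤ wl σ (wp σ l) + l'.length := by
  obtain ⟨l1, h1, h2⟩ := wl_spec σ l
  rw [← h2, ← wp_append]
  have := wl_le σ (l1 ++ l')
  rw [List.length_append, h1] at this
  rw [h2]; exact this

end alt

section rank2
variable (B : LinearMap.BilinForm ℝ V) (Δ : Module.Basis ι ℝ V) (σ : ι → (V ≃ₗ[ℝ] V))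

lemma altp_apply (hsymm : ∀ u v : V, B u v = B v u)
    (hdiag : ∀ i : ι, B (Δ i) (Δ i) = 1)
    (hσ : ∀ i u, σ i u = u - (2 * B (Δ i) u) • Δ i) (c : ℝ) (n : ℕ) :
    ∀ (s t : ι) (_ : B (Δ s) (Δ t) = -c) (j : ℕ),
    altp σ s t n (pc c (j+1) • Δ s + pc c j • Δ t) =
      pc c (j+n+1) • Δ (if Even n then s else t) + pc c (j+n) • Δ (if Even n then t else s) := by
  induction n with
  | zero => intro s t hc j; simp [altp]
  | succ n ih =>
    intro s t hc j
    have hc' : B (Δ t) (Δ s) = -c := by rw [hsymm, hc]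
    have e : σ t (pc c (j+1) • Δ s + pc c j • Δ t) =
        pc c (j+1+1) • Δ t + pc c (j+1) • Δ s := by
      rw [hσ]
      simp only [map_add, map_smul, hc', hdiag, pc, smul_eq_mul]
      module
    rw [altp, LinearEquiv.mul_apply, e, ih t s hc' (j+1)]
    have e2 : j + 1 + n = j + (n+1) := by ring
    rw [e2]
    by_cases hn : Even n
    · simp [hn, Nat.even_add_one]
    · simp [hn, Nat.even_add_one]

lemma altp_apply0 (hsymm : ∀ u v : V, B u v = B v u)
    (hdiag : ∀ i : ι, B (Δ i) (Δ i) = 1)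
    (hσ : ∀ i u, σ i u = u - (2 * B (Δ i) u) • Δ i) (c : ℝ) (n : ℕ)
    (s t : ι) (hc : B (Δ s) (Δ t) = -c) :
    altp σ s t n (Δ s) =
      pc c (n+1) • Δ (if Even n then s else t) + pc c n • Δ (if Even n then t else s) := by
  have := altp_apply B Δ σ hsymm hdiag hσ c n s t hc 0
  simpa [pc] using this

lemma altp_fix (hσ : ∀ i u, σ i u = u - (2 * B (Δ i) u) • Δ i) (n : ℕ) (u : V) :
    ∀ (s t : ι) (_ : B (Δ s) u = 0) (_ : B (Δ t) u = 0), altp σ s t n u = u := by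
  induction n with
  | zero => intros; simp [altp]
  | succ n ih =>
    intro s t hs ht
    rw [altp, LinearEquiv.mul_apply, hσ, ht]
    simp [ih t s ht hs]

lemma altp_braid (hsymm : ∀ u v : V, B u v = B v u)
    (hdiag : ∀ i : ι, B (Δ i) (Δ i) = 1)
    (hσ : ∀ i u, σ i u = u - (2 * B (Δ i) u) • Δ i) (k : ℕ) (hk : 2 ≤ k)
    (s t : ι) (hc : B (Δ s) (Δ t) = -Real.cos (Real.pi / k)) :
    altp σ s t k = altp σ t s k := by
  have hc' : B (Δ t) (Δ s) = -Real.cos (Real.pi / k) := by rw [hsymm, hc]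
  have key : ∀ s t, B (Δ s) (Δ t) = -Real.cos (Real.pi / k) →
      altp σ s t k (Δ s) = altp σ t s k (Δ s) := by
    intro s t hc
    rw [altp_apply0 B Δ σ hsymm hdiag hσ _ k s t hc, pc_k hk, pc_k_succ hk]
    obtain ⟨m, rfl⟩ : ∃ m, k = m + 1 := ⟨k-1, by omega⟩
    have e : σ s (Δ s) = - Δ s := by rw [hσ, hdiag]; module
    rw [altp, LinearEquiv.mul_apply, e, map_neg, altp_apply0 B Δ σ hsymm hdiag hσ _ m s t hc,
      pc_k hk]
    have := pc_k_pred hk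
    simp only [Nat.add_sub_cancel] at this
    rw [this]
    by_cases hm : Even m
    · simp [hm, Nat.even_add_one]
    · simp [hm, Nat.even_add_one]
  have hs := key s t hc
  have ht := (key t s hc').symm
  set c := Real.cos (Real.pi / k) with hcdef
  have hc2 : 1 - c^2 ≠ 0 := by
    have := sin_pi_div_pos hk
    have h2 := Real.sin_sq_add_cos_sq (Real.pi / k)
    rw [← hcdef] at h2
    have : 0 < Real.sin (Real.pi / k) ^ 2 := by positivity
    linarith
  ext u
  obtain ⟨a, b, ha, hb⟩ : ∃ a b : ℝ, B (Δ s) (u - a • Δ s - b • Δ t) = 0 ∧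
      B (Δ t) (u - a • Δ s - b • Δ t) = 0 := by
    refine ⟨(B (Δ s) u + c * B (Δ t) u) / (1 - c^2), (B (Δ t) u + c * B (Δ s) u) / (1 - c^2), ?_, ?_⟩
    · simp only [map_sub, map_smul, hdiag, hc, hc', smul_eq_mul]
      field_simp; ring
    · simp only [map_sub, map_smul, hdiag, hc, hc', smul_eq_mul]
      field_simp; ring
  have e : u = (u - a • Δ s - b • Δ t) + a • Δ s + b • Δ t := by module
  rw [e]
  simp only [map_add, map_smul]
  rw [hs, ht]
  have f1 := altp_fix B Δ σ hσ k _ s t ha hb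
  have f2 := altp_fix B Δ σ hσ k _ t s hb ha
  rw [f1, f2]

lemma rank2 (hsymm : ∀ u v : V, B u v = B v u)
    (hdiag : ∀ i : ι, B (Δ i) (Δ i) = 1)
    (hoff : ∀ i j : ι, i ≠ j → B (Δ i) (Δ j) ≤ -1 ∨
      ∃ k : ℕ, 2 ≤ k ∧ B (Δ i) (Δ j) = -Real.cos (Real.pi / (k : ℝ)))
    (hσ : ∀ i u, σ i u = u - (2 * B (Δ i) u) • Δ i) (hsq : ∀ i, σ i * σ i = 1)
    (s t : ι) (hst : s ≠ t) (u : List ι) (hu : ∀ x ∈ u, x = s ∨ x = t)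
    (H : ∀ u' : List ι, (∀ x ∈ u', x = s ∨ x = t) → wp σ u' = wp σ u * σ s →
      u.length ≤ u'.length) :
    ∃ a b : ℝ, 0 ≤ a ∧ 0 ≤ b ∧ wp σ u (Δ s) = a • Δ s + b • Δ t := by
  obtain ⟨n, hn, h | h⟩ := wp_alt σ hsq s t u hu
  · have conc : ∀ c, B (Δ s) (Δ t) = -c → 0 ≤ pc c n → 0 ≤ pc c (n+1) →
        ∃ a b : ℝ, 0 ≤ a ∧ 0 ≤ b ∧ wp σ u (Δ s) = a • Δ s + b • Δ t := by
      intro c hc h1 h2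
      rw [h, altp_apply0 B Δ σ hsymm hdiag hσ c n s t hc]
      by_cases hm : Even n
      · exact ⟨_, _, h2, h1, by simp [hm]⟩
      · exact ⟨_, _, h1, h2, by simp [hm, add_comm]⟩
    rcases hoff s t hst with hc | ⟨k, hk, hc⟩
    · have hc1 : 1 ≤ - B (Δ s) (Δ t) := by linarith
      exact conc _ (by ring) (pc_nonneg_of_one_le hc1 n).1 (pc_nonneg_of_one_le hc1 (n+1)).1
    · by_cases hnk : n < k
      · exact conc _ hc (pc_nonneg_of_le hk (by omega)) (pc_nonneg_of_le hk (by omega))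
      · exfalso
        obtain ⟨a, rfl⟩ : ∃ a, n = a + k := ⟨n - k, by omega⟩
        obtain ⟨l, h1, h2, h3⟩ := altp_split σ s t a k
        rw [h3, altp_braid B Δ σ hsymm hdiag hσ k hk s t hc] at h
        obtain ⟨m, rfl⟩ : ∃ m, k = m + 1 := ⟨k-1, by omega⟩
        obtain ⟨l', h1', h2', h3'⟩ := altp_list σ s t m
        have := H (l ++ l') (by
          intro x hx
          rcases List.mem_append.1 hx with hx | hx
          · exact h2 x hx
          · exact h2' x hx) (by
          rw [wp_append, h, altp, h3', mul_assoc, mul_assoc, hsq, mul_one])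
        rw [List.length_append] at this
        omega
  · cases n with
    | zero => exact ⟨1, 0, by simp, by simp, by simp [h, altp]⟩
    | succ m =>
      exfalso
      obtain ⟨l', h1', h2', h3'⟩ := altp_list σ s t m
      have := H l' h2' (by rw [h, altp, h3', mul_assoc, hsq, mul_one])
      omega

lemma tits (hsymm : ∀ u v : V, B u v = B v u)
    (hdiag : ∀ i : ι, B (Δ i) (Δ i) = 1)
    (hoff : ∀ i j : ι, i ≠ j → B (Δ i) (Δ j) ≤ -1 ∨
      ∃ k : ℕ, 2 ≤ k ∧ B (Δ i) (Δ j) = -Real.cos (Real.pi / (k : ℝ)))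
    (hσ : ∀ i u, σ i u = u - (2 * B (Δ i) u) • Δ i) (hsq : ∀ i, σ i * σ i = 1) (n : ℕ) :
    ∀ (l : List ι) (s : ι), wl σ (wp σ l) = n → n ≤ wl σ (wp σ l * σ s) →
      ∀ j, 0 ≤ Δ.repr (wp σ l (Δ s)) j := by
  classical
  induction n using Nat.strong_induction_on with
  | _ n ih =>
  intro l s hn hs
  have one : ∀ i, wp σ [i] = σ i := fun i => by simp [wp]
  obtain ⟨l0, hl0, hl0'⟩ := wl_spec σ l
  rw [← hl0'] at hn hs ⊢
  rw [← hl0', hn] at hl0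
  clear hl0'
  clear l
  rcases List.eq_nil_or_concat l0 with rfl | ⟨l1, t, rfl⟩
  · intro j
    simp only [wp, List.map_nil, List.prod_nil, LinearEquiv.coe_one, id_eq, Module.Basis.repr_self]
    exact Finsupp.single_nonneg.2 zero_le_one j
  set l0 := l1.concat t with hl0def
  have hw : wp σ l0 = wp σ l1 * σ t := by
    rw [hl0def, List.concat_eq_append, wp_append, one]
  have hlen : l1.length + 1 = n := by rw [← hl0, hl0def]; simp
  have hst : s ≠ t := by
    rintro rfl
    rw [hw, mul_assoc, hsq, mul_one] at hs
    have := wl_le σ l1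
    omega
  -- the set of decompositions
  let P : ℕ → Prop := fun m => ∃ v u : List ι, wl σ (wp σ v) = m ∧ (∀ x ∈ u, x = s ∨ x = t) ∧
    wp σ v * wp σ u = wp σ l0 ∧ m + u.length ≤ n
  have hP1 : P (wl σ (wp σ l1)) := by
    refine ⟨l1, [t], rfl, by simp, by rw [hw, one], ?_⟩
    have := wl_le σ l1
    simp; omega
  have hP : ∃ m, P m := ⟨_, hP1⟩
  obtain ⟨v, u, hv, hu, hvu, hle⟩ := Nat.find_spec hP
  have hmin : ∀ m, P m → Nat.find hP ≤ m := fun m hm => Nat.find_min' hP hm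
  set m := Nat.find hP with hm
  have hmn : m < n := by
    have := hmin _ hP1
    have := wl_le σ l1
    omega
  have hvpos : ∀ i, (i = s ∨ i = t) → ∀ j, 0 ≤ Δ.repr (wp σ v (Δ i)) j := by
    intro i hi
    apply ih m hmn v i hv
    by_contra hlt
    push Not at hlt
    have : P (wl σ (wp σ v * σ i)) := by
      refine ⟨v ++ [i], i :: u, by rw [wp_append, one], ?_, ?_, ?_⟩
      · intro x hx
        rcases List.mem_cons.1 hx with rfl | hx
        · exact hi
        · exact hu x hx
      · rw [show i :: u = [i] ++ u from rfl, wp_append, wp_append, one, ← hvu, mul_assoc,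
          ← mul_assoc (σ i), hsq, one_mul]
      · simp; omega
    have := hmin _ this
    omega
  obtain ⟨a, b, ha, hb, hab⟩ := rank2 B Δ σ hsymm hdiag hoff hσ hsq s t hst u hu (by
    intro u' hu' hu'2
    by_contra hlt
    push Not at hlt
    have h1 := wl_mul σ v u'
    rw [hu'2, ← mul_assoc, hvu] at h1
    omega)
  intro j
  rw [← hvu, LinearEquiv.mul_apply, hab]
  simp only [map_add, map_smul, Finsupp.add_apply, Finsupp.smul_apply, smul_eq_mul]
  have := hvpos s (Or.inl rfl) j
  have := hvpos t (Or.inr rfl) j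
  positivity

end rank2

section cox
variable (B : LinearMap.BilinForm ℝ V) (Δ : Module.Basis ι ℝ V) (σ : ι → (V ≃ₗ[ℝ] V))

lemma exists_sigma (hdiag : ∀ i : ι, B (Δ i) (Δ i) = 1) :
    ∃ σ : ι → (V ≃ₗ[ℝ] V), (∀ i u, σ i u = u - (2 * B (Δ i) u) • Δ i) ∧ (∀ i, σ i * σ i = 1) := by
  have h : ∀ i, ((2:ℝ) • B (Δ i)) (Δ i) = 2 := fun i => by simp [hdiag]
  refine ⟨fun i => Module.reflection (h i), fun i u => ?_, fun i => ?_⟩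
  · rw [Module.reflection_apply]; simp
  · ext u
    exact Module.involutive_reflection (h i) u

lemma mem_cox (hdiag : ∀ i : ι, B (Δ i) (Δ i) = 1)
    (hσ : ∀ i u, σ i u = u - (2 * B (Δ i) u) • Δ i) (hsq : ∀ i, σ i * σ i = 1) (w : V ≃ₗ[ℝ] V) :
    w ∈ cox B Δ ↔ ∃ l, wp σ l = w := by
  have hmem : ∀ i, σ i ∈ cox B Δ := fun i =>
    Subgroup.subset_closure ⟨i, fun u => by rw [hσ, hdiag, div_one]⟩
  have mem_prod_list : ∀ l, wp σ l ∈ cox B Δ := by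
    intro l
    apply Subgroup.list_prod_mem
    intro x hx
    obtain ⟨i, _, rfl⟩ := List.mem_map.1 hx
    exact hmem i
  constructor
  · intro hw
    induction hw using Subgroup.closure_induction with
    | mem x hx =>
      obtain ⟨i, hi⟩ := hx
      refine ⟨[i], ?_⟩
      ext u
      simp [wp, hσ, hi, hdiag]
    | one => exact ⟨[], by simp [wp]⟩
    | mul x y _ _ hx hy =>
      obtain ⟨l, rfl⟩ := hx
      obtain ⟨l', rfl⟩ := hy
      exact ⟨l ++ l', wp_append σ l l'⟩
    | inv x _ hx =>
      obtain ⟨l, rfl⟩ := hx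
      refine ⟨l.reverse, ?_⟩
      induction l with
      | nil => simp [wp]
      | cons a l ih =>
        rw [List.reverse_cons, wp_append, ih ((mem_prod_list l)), show a :: l = [a] ++ l from rfl, wp_append,
          mul_inv_rev]
        congr 1
        simp only [wp, List.map_cons, List.map_nil, List.prod_cons, List.prod_nil, mul_one]
        exact eq_inv_of_mul_eq_one_left (hsq a)
  · rintro ⟨l, rfl⟩
    exact mem_prod_list l

lemma cox_B (hsymm : ∀ u v : V, B u v = B v u) (hdiag : ∀ i : ι, B (Δ i) (Δ i) = 1)
    (w : V ≃ₗ[ℝ] V) (hw : w ∈ cox B Δ) : ∀ u v, B (w u) (w v) = B u v := by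
  induction hw using Subgroup.closure_induction with
  | mem x hx =>
    obtain ⟨i, hi⟩ := hx
    intro u v
    simp only [hi, hdiag, map_sub, map_smul, LinearMap.sub_apply, LinearMap.smul_apply,
      smul_eq_mul, hsymm u (Δ i)]
    ring
  | one => simp
  | mul x y _ _ hx hy => intro u v; rw [LinearEquiv.mul_apply, LinearEquiv.mul_apply, hx, hy]
  | inv x _ hx =>
    intro u v
    rw [← hx]
    have : ∀ u, x (x⁻¹ u) = u := fun u => by rw [← LinearEquiv.mul_apply]; simp
    rw [this, this]

lemma Phi_B (hsymm : ∀ u v : V, B u v = B v u) (hdiag : ∀ i : ι, B (Δ i) (Δ i) = 1)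
    {ρ : V} (h : ρ ∈ Phi B Δ) : B ρ ρ = 1 := by
  obtain ⟨w, hw, i, rfl⟩ := h
  rw [cox_B B Δ hsymm hdiag w hw, hdiag]

lemma refl_mem (hsymm : ∀ u v : V, B u v = B v u) (hdiag : ∀ i : ι, B (Δ i) (Δ i) = 1)
    {ρ : V} (h : ρ ∈ Phi B Δ) : ∃ r ∈ cox B Δ, ∀ u, r u = u - (2 * B ρ u) • ρ := by
  obtain ⟨w, hw, i, rfl⟩ := h
  obtain ⟨σ, hσ, hsq⟩ := exists_sigma B Δ hdiag
  have hi : σ i ∈ cox B Δ := (mem_cox B Δ σ hdiag hσ hsq _).2 ⟨[i], by simp [wp]⟩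
  refine ⟨w * σ i * w⁻¹, mul_mem (mul_mem hw hi) (inv_mem hw), fun u => ?_⟩
  have h1 : w (w⁻¹ u) = u := by rw [← LinearEquiv.mul_apply]; simp
  rw [LinearEquiv.mul_apply, LinearEquiv.mul_apply, hσ, map_sub, h1, map_smul]
  congr 3
  rw [← cox_B B Δ hsymm hdiag w hw, h1]

lemma root_pm (hsymm : ∀ u v : V, B u v = B v u)
    (hdiag : ∀ i : ι, B (Δ i) (Δ i) = 1)
    (hoff : ∀ i j : ι, i ≠ j → B (Δ i) (Δ j) ≤ -1 ∨
      ∃ k : ℕ, 2 ≤ k ∧ B (Δ i) (Δ j) = -Real.cos (Real.pi / (k : ℝ)))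
    {ρ : V} (h : ρ ∈ Phi B Δ) : ρ ∈ posPhi B Δ ∨ -ρ ∈ posPhi B Δ := by
  obtain ⟨w, hw, s, rfl⟩ := h
  obtain ⟨σ, hσ, hsq⟩ := exists_sigma B Δ hdiag
  obtain ⟨l, rfl⟩ := (mem_cox B Δ σ hdiag hσ hsq _).1 hw
  have one : wp σ [s] = σ s := by simp [wp]
  by_cases hle : wl σ (wp σ l) ≤ wl σ (wp σ l * σ s)
  · exact Or.inl ⟨⟨_, hw, s, rfl⟩, tits B Δ σ hsymm hdiag hoff hσ hsq _ l s rfl hle⟩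
  · right
    have e : -(wp σ l (Δ s)) = wp σ (l ++ [s]) (Δ s) := by
      rw [wp_append, one, LinearEquiv.mul_apply, hσ, hdiag, ← map_neg]
      congr 1; module
    rw [e]
    refine ⟨⟨_, (mem_cox B Δ σ hdiag hσ hsq _).2 ⟨_, rfl⟩, s, rfl⟩,
      tits B Δ σ hsymm hdiag hoff hσ hsq _ _ s rfl ?_⟩
    rw [wp_append, one, mul_assoc, hsq, mul_one]
    omega

lemma exists_desc (hsymm : ∀ u v : V, B u v = B v u)
    (hdiag : ∀ i : ι, B (Δ i) (Δ i) = 1)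
    (hoff : ∀ i j : ι, i ≠ j → B (Δ i) (Δ j) ≤ -1 ∨
      ∃ k : ℕ, 2 ≤ k ∧ B (Δ i) (Δ j) = -Real.cos (Real.pi / (k : ℝ)))
    {w : V ≃ₗ[ℝ] V} (hw : w ∈ cox B Δ) (hne : w ≠ 1) :
    ∃ i, ∀ j, Δ.repr (w (Δ i)) j ≤ 0 := by
  obtain ⟨σ, hσ, hsq⟩ := exists_sigma B Δ hdiag
  obtain ⟨l, rfl⟩ := (mem_cox B Δ σ hdiag hσ hsq _).1 hw
  obtain ⟨l0, hl0, hl0'⟩ := wl_spec σ l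
  rw [← hl0'] at hl0 hne ⊢
  rcases List.eq_nil_or_concat l0 with rfl | ⟨l1, t, rfl⟩
  · simp [wp] at hne
  have one : wp σ [t] = σ t := by simp [wp]
  have hw : wp σ (l1.concat t) = wp σ l1 * σ t := by
    rw [List.concat_eq_append, wp_append, one]
  rw [hw] at hl0 ⊢
  simp only [List.length_concat] at hl0
  have h1 := wl_le σ l1
  refine ⟨t, fun j => ?_⟩
  have := tits B Δ σ hsymm hdiag hoff hσ hsq _ l1 t rfl (by omega) j
  have e : (wp σ l1 * σ t) (Δ t) = -(wp σ l1 (Δ t)) := by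
    rw [LinearEquiv.mul_apply, hσ, hdiag, ← map_neg]
    congr 1; module
  rw [e]
  simpa using this

lemma B_expand (u v : V) :
    B u v = ∑ j, Δ.repr v j * B u (Δ j) := by
  conv_lhs => rw [← Δ.sum_repr v]
  simp only [map_sum, map_smul, smul_eq_mul]

lemma Phi_supp (hsymm : ∀ u v : V, B u v = B v u) (hdiag : ∀ i : ι, B (Δ i) (Δ i) = 1)
    {ρ : V} (h : ρ ∈ Phi B Δ) :
    ∃ i, ∀ j, Δ.repr ρ j ≠ 0 → Relation.ReflTransGen (fun i j => B (Δ i) (Δ j) ≠ 0) i j := by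
  classical
  obtain ⟨w, hw, i, rfl⟩ := h
  obtain ⟨σ, hσ, hsq⟩ := exists_sigma B Δ hdiag
  obtain ⟨l, rfl⟩ := (mem_cox B Δ σ hdiag hσ hsq _).1 hw
  refine ⟨i, ?_⟩
  clear hw
  induction l with
  | nil =>
    intro j hj
    by_cases hij : i = j
    · subst hij; exact Relation.ReflTransGen.refl
    · simp [wp, Finsupp.single_apply, hij] at hj
  | cons k l ih =>
    intro j hj
    have e : wp σ (k :: l) (Δ i) = σ k (wp σ l (Δ i)) := by
      simp [wp, LinearEquiv.mul_apply]
    rw [e, hσ] at hj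
    set u := wp σ l (Δ i)
    by_cases hju : Δ.repr u j = 0
    · by_cases hkj : k = j
      · subst hkj
        have hB : B (Δ k) u ≠ 0 := by
          intro h0; simp [h0, hju] at hj
        rw [B_expand B Δ] at hB
        obtain ⟨j', _, hj'⟩ := Finset.exists_ne_zero_of_sum_ne_zero hB
        refine (ih j' (left_ne_zero_of_mul hj')).tail ?_
        rw [hsymm]
        exact right_ne_zero_of_mul hj'
      · simp [hju, Finsupp.single_apply, hkj] at hj
    · exact ih j hju

end cox

section top
variable (B : LinearMap.BilinForm ℝ V) (Δ : Module.Basis ι ℝ V)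

lemma cont_repr (j : ι) : Continuous (fun v => Δ.repr v j) := by
  haveI : FiniteDimensional ℝ V := Module.Finite.of_basis Δ
  exact (Δ.coord j).continuous_of_finiteDimensional

lemma cont_l1 : Continuous (l1 Δ) :=
  continuous_finsetSum _ fun j _ => cont_repr Δ j

lemma cont_B {ι V : Type*} [Fintype ι] [NormedAddCommGroup V] [NormedSpace ℝ V]
    (B : LinearMap.BilinForm ℝ V) (Δ : Module.Basis ι ℝ V) :
    Continuous (fun p : V × V => B p.1 p.2) := by
  have : (fun p : V × V => B p.1 p.2) =
      fun p => ∑ j, Δ.repr p.2 j * ∑ i, Δ.repr p.1 i * B (Δ i) (Δ j) := by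
    ext p
    rw [B_expand B Δ]
    refine Finset.sum_congr rfl fun j _ => ?_
    congr 1
    conv_lhs => rw [← Δ.sum_repr p.1]
    simp only [map_sum, map_smul, LinearMap.sum_apply, LinearMap.smul_apply, smul_eq_mul]
  rw [this]
  refine continuous_finsetSum _ fun j _ => ((cont_repr Δ j).comp continuous_snd).mul ?_
  exact continuous_finsetSum _ fun i _ => ((cont_repr Δ i).comp continuous_fst).mul continuous_const

lemma inter_inf {x : V} {S U : Set V} (h : AccPt x (𝓟 S)) (hU : U ∈ 𝓝 x) :
    (U ∩ S).Infinite := by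
  have h1 := h.nhds_inter hU
  intro hfin
  have hU2 : ((U ∩ S) \ {x})ᶜ ∈ 𝓝 x :=
    (hfin.subset Set.diff_subset).isClosed.isOpen_compl.mem_nhds (by simp)
  obtain ⟨y, ⟨hy1, hy2⟩, hy3⟩ := accPt_iff_nhds.1 h1 _ hU2
  exact hy1 ⟨hy2, hy3⟩

lemma compact_box (M : ℝ) : IsCompact {v : V | ∀ j, Δ.repr v j ∈ Set.Icc 0 M} := by
  haveI : FiniteDimensional ℝ V := Module.Finite.of_basis Δ
  have h : IsCompact (Set.pi Set.univ (fun _ : ι => Set.Icc (0:ℝ) M)) :=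
    isCompact_univ_pi fun _ => isCompact_Icc
  have h2 := h.image (Δ.equivFun.symm.toLinearMap.continuous_of_finiteDimensional)
  convert h2 using 1
  ext v
  constructor
  · intro hv
    exact ⟨Δ.equivFun v, fun j _ => by simpa using hv j, by simp⟩
  · rintro ⟨f, hf, rfl⟩ j
    have := hf j trivial
    have e : Δ.repr (Δ.equivFun.symm f) j = f j := by
      rw [← Δ.equivFun_apply, LinearEquiv.apply_symm_apply]
    simp only [LinearEquiv.coe_coe, e]
    exact this

lemma finite_bdd (hsymm : ∀ u v : V, B u v = B v u)
    (hdiag : ∀ i : ι, B (Δ i) (Δ i) = 1)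
    (hoff : ∀ i j : ι, i ≠ j → B (Δ i) (Δ j) ≤ -1 ∨
      ∃ k : ℕ, 2 ≤ k ∧ B (Δ i) (Δ j) = -Real.cos (Real.pi / (k : ℝ))) (M : ℝ) :
    {ρ ∈ posPhi B Δ | l1 Δ ρ ≤ M}.Finite := by
  by_contra hinf
  change Set.Infinite _ at hinf
  obtain ⟨x, _, hx⟩ := hinf.exists_accPt_of_subset_isCompact (compact_box Δ M) (by
    rintro ρ ⟨⟨_, h1⟩, h2⟩ j
    refine ⟨h1 j, le_trans ?_ h2⟩
    exact Finset.single_le_sum (f := fun i => Δ.repr ρ i) (fun i _ => h1 i) (Finset.mem_univ j))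
  have hBx : B x x = 1 := by
    have hcl : IsClosed {v : V | B v v = 1} :=
      isClosed_eq ((cont_B B Δ).comp (continuous_id.prodMk continuous_id)) continuous_const
    have : x ∈ closure {v : V | B v v = 1} := by
      rw [mem_closure_iff_clusterPt]
      refine (hx.clusterPt).mono (Filter.principal_mono.2 ?_)
      rintro ρ ⟨⟨h, _⟩, _⟩
      exact Phi_B B Δ hsymm hdiag h
    rwa [hcl.closure_eq] at this
  let R : V → V → V := fun a u => u - (2 * B a u) • a
  have hRc : ∀ i, Continuous (fun p : V × V => Δ.repr (R p.1 (R p.2 (Δ i))) i) := by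
    intro i
    refine (cont_repr Δ i).comp ?_
    have h1 : Continuous (fun p : V × V => R p.1 p.2) :=
      continuous_snd.sub ((continuous_const.mul (cont_B B Δ)).smul continuous_fst)
    have h2 : Continuous (fun p : V × V => R p.2 (Δ i)) :=
      h1.comp (continuous_snd.prodMk continuous_const)
    exact h1.comp (continuous_fst.prodMk h2)
  have hev : ∀ᶠ p in 𝓝 (x, x), ∀ i, 0 < Δ.repr (R p.1 (R p.2 (Δ i))) i := by
    rw [Filter.eventually_all]
    intro i
    refine (hRc i).continuousAt.eventually (lt_mem_nhds ?_)
    have : R x (R x (Δ i)) = Δ i := by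
      simp only [R, map_sub, map_smul, smul_eq_mul, hBx]
      module
    simp [this]
  rw [nhds_prod_eq] at hev
  obtain ⟨U, hU, hUU⟩ := Filter.mem_prod_same_iff.1 hev
  have hUS := inter_inf hx hU
  obtain ⟨a, ⟨haU, haS⟩⟩ := hUS.nonempty
  obtain ⟨b, ⟨⟨hbU, hbS⟩, hb⟩⟩ := (hUS.diff (Set.toFinite {a, -a})).nonempty
  have ha := haS.1.1
  have hb' := hbS.1.1
  obtain ⟨r, hr, hr'⟩ := refl_mem B Δ hsymm hdiag ha
  obtain ⟨q, hq, hq'⟩ := refl_mem B Δ hsymm hdiag hb'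
  have hBa := Phi_B B Δ hsymm hdiag ha
  have hBb := Phi_B B Δ hsymm hdiag hb'
  by_cases h1 : r * q = 1
  · apply hb
    have h2 : r (q b) = b := by rw [← LinearEquiv.mul_apply, h1]; rfl
    have h3 : q b = -b := by rw [hq', hBb]; module
    rw [h3, map_neg, hr'] at h2
    have h4 : b = B a b • a := by
      have : (2:ℝ) • b = (2:ℝ) • (B a b • a) := by
        rw [neg_sub, sub_eq_iff_eq_add] at h2
        rw [smul_smul, two_smul, ← h2]
      exact smul_right_injective V (two_ne_zero (α := ℝ)) this
    have h5 : B a b * B a b = 1 := by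
      rw [h4] at hBb
      simp only [map_smul, LinearMap.smul_apply, smul_eq_mul, hBa, mul_one] at hBb
      exact hBb
    rcases mul_self_eq_one_iff.1 h5 with h | h
    · left; rw [h4, h, one_smul]
    · right; rw [h4, h]; simp
  · obtain ⟨i, hi⟩ := exists_desc B Δ hsymm hdiag hoff (mul_mem hr hq) h1
    have := hUU (show (a, b) ∈ U ×ˢ U from ⟨haU, hbU⟩) i
    have h2 := hi i
    rw [LinearEquiv.mul_apply, hr', hq'] at h2
    exact absurd this (not_lt.2 h2)

end top

section pf
variable (B : LinearMap.BilinForm ℝ V) (Δ : Module.Basis ι ℝ V)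

lemma off_nonpos
    (hoff : ∀ i j : ι, i ≠ j → B (Δ i) (Δ j) ≤ -1 ∨
      ∃ k : ℕ, 2 ≤ k ∧ B (Δ i) (Δ j) = -Real.cos (Real.pi / (k : ℝ)))
    (i j : ι) (hij : i ≠ j) : B (Δ i) (Δ j) ≤ 0 := by
  rcases hoff i j hij with h | ⟨k, hk, h⟩
  · linarith
  · rw [h, neg_nonpos]
    have hk' : (2:ℝ) ≤ k := by exact_mod_cast hk
    have := Real.pi_pos
    apply Real.cos_nonneg_of_neg_pi_div_two_le_of_le
    · have : 0 ≤ Real.pi / k := by positivity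
      linarith
    · exact div_le_div_of_nonneg_left this.le (by norm_num) hk'

lemma rad_of_iso (hsymm : ∀ u v : V, B u v = B v u) (hpsd : ∀ v : V, 0 ≤ B v v) {v : V}
    (hv : B v v = 0) (u : V) : B u v = 0 := by
  by_contra h
  obtain ⟨s, hs⟩ : ∃ s : ℝ, s * B u v = -(B u u + 1) / 2 :=
    ⟨-(B u u + 1) / 2 / B u v, div_mul_cancel₀ _ h⟩
  have := hpsd (u + s • v)
  simp only [map_add, map_smul, LinearMap.add_apply, LinearMap.smul_apply, smul_eq_mul, hv,
    hsymm v u] at this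
  linarith

lemma zero_prop (hnp : ∀ i j, i ≠ j → B (Δ i) (Δ j) ≤ 0) {z : V} (hz : ∀ j, 0 ≤ Δ.repr z j)
    (hrad : ∀ u, B u z = 0) {a b : ι} (ha : Δ.repr z a = 0)
    (hab : Relation.ReflTransGen (fun i j => B (Δ i) (Δ j) ≠ 0) a b) : Δ.repr z b = 0 := by
  induction hab with
  | refl => exact ha
  | @tail b c _ hbc ih =>
    have h := hrad (Δ b)
    rw [B_expand B Δ] at h
    have hle : ∀ j ∈ Finset.univ, Δ.repr z j * B (Δ b) (Δ j) ≤ 0 := by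
      intro j _
      by_cases hj : b = j
      · subst hj; simp [ih]
      · exact mul_nonpos_of_nonneg_of_nonpos (hz j) (hnp b j hj)
    have := (Finset.sum_eq_zero_iff_of_nonpos hle).1 h c (Finset.mem_univ c)
    exact (mul_eq_zero.1 this).resolve_right hbc

lemma pf_unique (hsymm : ∀ u v : V, B u v = B v u)
    (hnp : ∀ i j, i ≠ j → B (Δ i) (Δ j) ≤ 0) (i0 : ι) {x v : V}
    (hx : ∀ j, 0 ≤ Δ.repr x j) (hxr : ∀ u, B u x = 0) (hx1 : l1 Δ x = 1)
    (hxs : ∀ j, Δ.repr x j ≠ 0 → Relation.ReflTransGen (fun i j => B (Δ i) (Δ j) ≠ 0) i0 j)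
    (hvr : ∀ u, B u v = 0) (hv1 : l1 Δ v = 1)
    (hvs : ∀ j, Δ.repr v j ≠ 0 → Relation.ReflTransGen (fun i j => B (Δ i) (Δ j) ≠ 0) i0 j) :
    v = x := by
  classical
  set r : ι → ι → Prop := Relation.ReflTransGen (fun i j => B (Δ i) (Δ j) ≠ 0) with hr
  have hrs : ∀ a b, r a b → r b a := fun a b h => by
    have : Std.Symm (fun i j => B (Δ i) (Δ j) ≠ 0) := ⟨fun i j h => by rwa [hsymm]⟩
    exact symm h
  have hrt : ∀ a b, r i0 a → r i0 b → r a b := fun a b h1 h2 => (hrs _ _ h1).trans h2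
  have hpos : ∀ a, r i0 a → 0 < Δ.repr x a := by
    intro a ha
    refine lt_of_le_of_ne (hx a) (Ne.symm ?_)
    intro h0
    have : ∀ b, Δ.repr x b = 0 := by
      intro b
      by_contra hb
      exact hb (zero_prop B Δ hnp hx hxr h0 (hrt a b ha (hxs b hb)))
    simp [l1, this] at hx1
  obtain ⟨a, ha, hmin⟩ := Finset.exists_min_image (Finset.univ.filter (fun a => r i0 a))
    (fun a => Δ.repr v a / Δ.repr x a) ⟨i0, by simp [hr, Relation.ReflTransGen.refl]⟩
  have ha' : r i0 a := by simpa using ha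
  set t := Δ.repr v a / Δ.repr x a with ht
  have hrep : ∀ b, Δ.repr (v - t • x) b = Δ.repr v b - t * Δ.repr x b := fun b => by simp
  have hout : ∀ b, ¬ r i0 b → Δ.repr (v - t • x) b = 0 := by
    intro b hb
    have h1 : Δ.repr v b = 0 := by by_contra h; exact hb (hvs b h)
    have h2 : Δ.repr x b = 0 := by by_contra h; exact hb (hxs b h)
    rw [hrep, h1, h2]; ring
  have hz : ∀ b, 0 ≤ Δ.repr (v - t • x) b := by
    intro b
    by_cases hb : r i0 b
    · have := hmin b (by simpa using hb)
      rw [le_div_iff₀ (hpos b hb)] at this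
      rw [hrep]; linarith
    · rw [hout b hb]
  have hza : Δ.repr (v - t • x) a = 0 := by
    have := (hpos a ha').ne'
    rw [hrep, ht]; field_simp; ring
  have hz0 : v - t • x = 0 := by
    apply Δ.repr.injective
    ext b
    by_cases hb : r i0 b
    · rw [zero_prop B Δ hnp hz (fun u => by simp [hvr, hxr]) hza (hrt a b ha' hb)]; simp
    · rw [hout b hb]; simp
  have hvx : v = t • x := sub_eq_zero.1 hz0
  have : l1 Δ v = t * l1 Δ x := by
    rw [hvx]; simp [l1, Finset.mul_sum]
  rw [hv1, hx1, mul_one] at this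
  rw [hvx, ← this, one_smul]

end pf

lemma l1_pos (B : LinearMap.BilinForm ℝ V) (Δ : Module.Basis ι ℝ V)
    (hsymm : ∀ u v : V, B u v = B v u)
    (hdiag : ∀ i : ι, B (Δ i) (Δ i) = 1) {ρ : V} (h : ρ ∈ posPhi B Δ) : 0 < l1 Δ ρ := by
  have h1 := Phi_B B Δ hsymm hdiag h.1
  refine lt_of_le_of_ne (Finset.sum_nonneg fun i _ => h.2 i) (Ne.symm ?_)
  intro h0
  have h2 := (Finset.sum_eq_zero_iff_of_nonneg (fun i _ => h.2 i)).1 h0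
  have : ρ = 0 := by
    apply Δ.repr.injective
    ext b
    rw [h2 b (Finset.mem_univ b)]; simp
  simp [this] at h1

lemma l1_smul (Δ : Module.Basis ι ℝ V) (c : ℝ) (v : V) : l1 Δ (c • v) = c * l1 Δ v := by
  simp [l1, Finset.mul_sum]

lemma B_nrm (B : LinearMap.BilinForm ℝ V) (Δ : Module.Basis ι ℝ V)
    (hsymm : ∀ u v : V, B u v = B v u)
    (hdiag : ∀ i : ι, B (Δ i) (Δ i) = 1) {ρ : V} (h : ρ ∈ posPhi B Δ) :
    B (nrm Δ ρ) (nrm Δ ρ) = ((l1 Δ ρ)⁻¹) ^ 2 := by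
  have h1 := Phi_B B Δ hsymm hdiag h.1
  simp only [nrm, map_smul, LinearMap.smul_apply, smul_eq_mul, h1]
  ring

lemma E_props (B : LinearMap.BilinForm ℝ V) (Δ : Module.Basis ι ℝ V)
    (hsymm : ∀ u v : V, B u v = B v u)
    (hdiag : ∀ i : ι, B (Δ i) (Δ i) = 1)
    (hoff : ∀ i j : ι, i ≠ j → B (Δ i) (Δ j) ≤ -1 ∨
      ∃ k : ℕ, 2 ≤ k ∧ B (Δ i) (Δ j) = -Real.cos (Real.pi / (k : ℝ)))
    (hpsd : ∀ v : V, 0 ≤ B v v) {x : V} (hx : x ∈ Eset B Δ) :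
    (∀ j, 0 ≤ Δ.repr x j) ∧ l1 Δ x = 1 ∧ B x x = 0 ∧
    ∃ i, ∀ j, Δ.repr x j ≠ 0 → Relation.ReflTransGen (fun i j => B (Δ i) (Δ j) ≠ 0) i j := by
  have hcl : ∀ S : Set V, IsClosed S → nPhi B Δ ⊆ S → x ∈ S := by
    intro S hS hsub
    have : x ∈ closure S := by
      rw [mem_closure_iff_clusterPt]
      exact (AccPt.clusterPt hx).mono (Filter.principal_mono.2 hsub)
    rwa [hS.closure_eq] at this
  refine ⟨fun j => ?_, ?_, ?_, ?_⟩
  · refine hcl {v | 0 ≤ Δ.repr v j} (isClosed_le continuous_const (cont_repr Δ j)) ?_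
    rintro _ ⟨ρ, hρ, rfl⟩
    have h1 := l1_pos B Δ hsymm hdiag hρ
    have h2 := hρ.2 j
    simp only [nrm, Set.mem_ofPred_eq, map_smul, Finsupp.smul_apply, smul_eq_mul]
    positivity
  · refine hcl {v | l1 Δ v = 1} (isClosed_eq (cont_l1 Δ) continuous_const) ?_
    rintro _ ⟨ρ, hρ, rfl⟩
    have h1 := l1_pos B Δ hsymm hdiag hρ
    simp only [nrm, Set.mem_ofPred_eq, l1_smul]
    exact inv_mul_cancel₀ h1.ne'
  · by_contra hne
    have hpos : 0 < B x x := lt_of_le_of_ne (hpsd x) (Ne.symm hne)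
    have hc : Continuous (fun v => B v v) := (cont_B B Δ).comp (continuous_id.prodMk continuous_id)
    have hU : {y | B x x / 2 < B y y} ∈ 𝓝 x :=
      hc.continuousAt.eventually (lt_mem_nhds (by linarith))
    refine inter_inf hx hU ?_
    refine ((finite_bdd B Δ hsymm hdiag hoff (2 / B x x + 1)).image (nrm Δ)).subset ?_
    rintro _ ⟨hy, ρ, hρ, rfl⟩
    refine ⟨ρ, ⟨hρ, ?_⟩, rfl⟩
    have h1 := l1_pos B Δ hsymm hdiag hρ
    simp only [Set.mem_ofPred_eq, B_nrm B Δ hsymm hdiag hρ] at hy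
    set L := l1 Δ ρ
    have hL : L ^ 2 < 2 / B x x := by
      rw [lt_div_iff₀ hpos]
      rw [inv_pow, lt_inv_comm₀ (by positivity) (by positivity)] at hy
      rw [inv_div, lt_div_iff₀ hpos] at hy
      exact hy
    nlinarith [sq_nonneg (L - 1)]
  · have := hcl (⋃ i, {v | ∀ j, Δ.repr v j ≠ 0 →
        Relation.ReflTransGen (fun i j => B (Δ i) (Δ j) ≠ 0) i j}) ?_ ?_
    · simpa using this
    · refine isClosed_iUnion_of_finite fun i => ?_
      simp only [Set.ofPred_forall]
      refine isClosed_iInter fun j => ?_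
      by_cases h : Relation.ReflTransGen (fun i j => B (Δ i) (Δ j) ≠ 0) i j
      · simp [h]
      · simp only [h, imp_false, not_not]
        exact isClosed_eq (cont_repr Δ j) continuous_const
    · rintro _ ⟨ρ, hρ, rfl⟩
      obtain ⟨i, hi⟩ := Phi_supp B Δ hsymm hdiag hρ.1
      refine Set.mem_iUnion.2 ⟨i, fun j hj => hi j ?_⟩
      intro h0
      simp [nrm, h0] at hj

lemma E_nonempty (B : LinearMap.BilinForm ℝ V) (Δ : Module.Basis ι ℝ V)
    (hsymm : ∀ u v : V, B u v = B v u)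
    (hdiag : ∀ i : ι, B (Δ i) (Δ i) = 1)
    (hoff : ∀ i j : ι, i ≠ j → B (Δ i) (Δ j) ≤ -1 ∨
      ∃ k : ℕ, 2 ≤ k ∧ B (Δ i) (Δ j) = -Real.cos (Real.pi / (k : ℝ)))
    (hinf : (Phi B Δ).Infinite) : (Eset B Δ).Nonempty := by
  have hposinf : (posPhi B Δ).Infinite := by
    intro hfin
    refine hinf ((hfin.union (hfin.image (fun v => -v))).subset ?_)
    intro ρ hρ
    rcases root_pm B Δ hsymm hdiag hoff hρ with h | h
    · exact Or.inl h
    · exact Or.inr ⟨-ρ, h, neg_neg ρ⟩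
  have hinj : Set.InjOn (nrm Δ) (posPhi B Δ) := by
    intro a ha b hb hab
    have h1 := B_nrm B Δ hsymm hdiag ha
    rw [hab, B_nrm B Δ hsymm hdiag hb] at h1
    have la := l1_pos B Δ hsymm hdiag ha
    have lb := l1_pos B Δ hsymm hdiag hb
    have h2 := (pow_left_inj₀ (by positivity) (by positivity) two_ne_zero).1 h1
    simp only [nrm, h2] at hab
    exact smul_right_injective V (inv_pos.2 la).ne' hab
  have hn : (nPhi B Δ).Infinite := hposinf.image hinj
  obtain ⟨x, _, hx⟩ := hn.exists_accPt_of_subset_isCompact (compact_box Δ 1) (by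
    rintro _ ⟨ρ, hρ, rfl⟩ j
    have lp := l1_pos B Δ hsymm hdiag hρ
    have h2 := hρ.2 j
    simp only [nrm, map_smul, Finsupp.smul_apply, smul_eq_mul]
    refine ⟨by positivity, ?_⟩
    rw [inv_mul_le_iff₀ lp, mul_one]
    exact Finset.single_le_sum (f := fun i => Δ.repr ρ i) (fun i _ => hρ.2 i) (Finset.mem_univ j))
  exact ⟨x, hx⟩

/-- If `Φ` is infinite and `B` is positive semidefinite but not positive definite
(i.e. `(Φ,Δ)` is an affine based root system), then `E(Φ)` is finite; if moreover
`(Φ,Δ)` is irreducible, then `E(Φ)` is a singleton, equal to `Q̂ = Q ∩ V₁`. -/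
theorem statement8 (B : LinearMap.BilinForm ℝ V) (Δ : Module.Basis ι ℝ V)
    (hsymm : ∀ u v : V, B u v = B v u)
    (hdiag : ∀ i : ι, B (Δ i) (Δ i) = 1)
    (hoff : ∀ i j : ι, i ≠ j → B (Δ i) (Δ j) ≤ -1 ∨
      ∃ k : ℕ, 2 ≤ k ∧ B (Δ i) (Δ j) = -Real.cos (Real.pi / (k : ℝ)))
    (hinf : (Phi B Δ).Infinite)
    (hpsd : ∀ v : V, 0 ≤ B v v)
    (hnd : ¬ ∀ v : V, v ≠ 0 → 0 < B v v) :
    (Eset B Δ).Finite ∧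
    ((¬ ∃ I : Set ι, I.Nonempty ∧ Iᶜ.Nonempty ∧ ∀ i ∈ I, ∀ j ∈ Iᶜ, B (Δ i) (Δ j) = 0) →
      ∃ x : V, Eset B Δ = {x} ∧ isoQ B ∩ { v : V | l1 Δ v = 1 } = {x}) := by
  have hnp := off_nonpos B Δ hoff
  have hE := fun {x : V} (hx : x ∈ Eset B Δ) => E_props B Δ hsymm hdiag hoff hpsd hx
  have hrad := fun {v : V} (hv : B v v = 0) => rad_of_iso B hsymm hpsd hv
  constructor
  · have hsub : Eset B Δ ⊆ ⋃ i, {x ∈ Eset B Δ | ∀ j, Δ.repr x j ≠ 0 →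
        Relation.ReflTransGen (fun i j => B (Δ i) (Δ j) ≠ 0) i j} := by
      intro x hx
      obtain ⟨i, hi⟩ := (hE hx).2.2.2
      exact Set.mem_iUnion.2 ⟨i, hx, hi⟩
    refine (Set.finite_iUnion fun i => Set.Subsingleton.finite ?_).subset hsub
    rintro v ⟨hv, hvs⟩ x ⟨hx, hxs⟩
    exact pf_unique B Δ hsymm hnp i (hE hx).1 (hrad (hE hx).2.2.1) (hE hx).2.1 hxs
      (hrad (hE hv).2.2.1) (hE hv).2.1 hvs
  · intro hirr
    obtain ⟨x, hx⟩ := E_nonempty B Δ hsymm hdiag hoff hinf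
    obtain ⟨hx0, hx1, hxq, i, hxs⟩ := hE hx
    have hall : ∀ j, Relation.ReflTransGen (fun i j => B (Δ i) (Δ j) ≠ 0) i j := by
      by_contra hne
      push Not at hne
      obtain ⟨j, hj⟩ := hne
      refine hirr ⟨{j | Relation.ReflTransGen (fun i j => B (Δ i) (Δ j) ≠ 0) i j},
        ⟨i, Relation.ReflTransGen.refl⟩, ⟨j, hj⟩, fun a ha b hb => ?_⟩
      by_contra h0
      exact hb (Relation.ReflTransGen.tail ha h0)
    have huniq : ∀ v, B v v = 0 → l1 Δ v = 1 → v = x := fun v hv hv1 =>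
      pf_unique B Δ hsymm hnp i hx0 (hrad hxq) hx1 hxs (hrad hv) hv1 (fun j _ => hall j)
    refine ⟨x, ?_, ?_⟩
    · ext v
      constructor
      · intro hv; exact huniq v (hE hv).2.2.1 (hE hv).2.1
      · rintro rfl; exact hx
    · ext v
      constructor
      · rintro ⟨hv, hv1⟩; exact huniq v hv hv1
      · rintro rfl; exact ⟨hxq, hx1⟩
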